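/- Let p be an odd prime, n ≥ 1, K = ℚ_p(ζ_{p^n}), and π = ζ_{p^n} - 1. For a principal unit ε of K, Tr_{K/ℚ_p}(π^{-1}·ζ_{p^n}·log ε) lies in ℤ_p (so the second Artin–Hasse formula (ε,π)_{p^n} = ζ_{p^n}^{Tr(π^{-1}ζ_{p^n} log ε)/p^n} defines an element of μ_{p^n}). -/

import Mathlib

/-!
Write `N = p ^ (k + 1)`, `π = ζ - 1` and `e = φ(N)`. Since `Φ_N(1) = p` and all `η - 1` with `η` a
primitive `N`-th root of unity have the same norm, `‖π‖ ^ e = p⁻¹`. Hence the nonzero terms of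
`∑ i < e, aᵢ πⁱ` with `aᵢ ∈ ℚ_p` have pairwise distinct norms: the powers `πⁱ` with `i < e` form a
basis of `K` (so that `Φ_N` is irreducible over `ℚ_p`), the unit ball of `K` is `ℤ_p[π]`, and
`‖u‖ < 1` forces `‖u‖ ≤ ‖π‖`. Two estimates then combine:

* `Tr (ζ ^ i)` is the sum of the `i`-th powers of the primitive `N`-th roots of unity, an integer
  multiple of `p ^ k`, so `Tr` maps the unit ball into `p ^ k ℤ_p`;
* by Bernoulli's inequality, each term of the series of `log (1 + u)` has norm at most
  `p ^ k ‖π‖`, so `p ^ k π⁻¹ ζ log ε` lies in the unit ball.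
-/

open Polynomial Finset Module

section RootsOfUnity

variable {R : Type*} [CommRing R] [IsDomain R] {ζ : R}

theorem exists_sum_nthRootsFinset_pow_eq {m : ℕ} (hζ : IsPrimitiveRoot ζ m) (i : ℕ) :
    ∃ c : ℤ, ∑ μ ∈ nthRootsFinset m (1 : R), μ ^ i = m * c := by
  classical
  have hgeom : ∑ μ ∈ nthRootsFinset m (1 : R), μ ^ i = ∑ j ∈ range m, (ζ ^ i) ^ j := by
    rw [nthRootsFinset_def, Finset.sum, Multiset.toFinset_val,
      Multiset.dedup_eq_self.2 hζ.nthRoots_one_nodup, hζ.nthRoots_eq (one_pow m), Multiset.map_map]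
    simp [Finset.sum, pow_right_comm]
  rw [hgeom]
  by_cases h : ζ ^ i = 1
  · exact ⟨1, by simp [h]⟩
  · refine ⟨0, ?_⟩
    have hmul := geom_sum_mul (ζ ^ i) m
    rw [pow_right_comm, hζ.pow_eq_one, one_pow, sub_self, mul_eq_zero, sub_eq_zero] at hmul
    simpa using hmul.resolve_right h

theorem sum_nthRootsFinset_eq_sum_divisors {m : ℕ} {M : Type*} [AddCommMonoid M] (f : R → M) :
    ∑ μ ∈ nthRootsFinset m (1 : R), f μ = ∑ d ∈ m.divisors, ∑ μ ∈ primitiveRoots d R, f μ := by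
  classical
  rw [IsPrimitiveRoot.nthRoots_one_eq_biUnion_primitiveRoots, sum_biUnion]
  exact fun _ _ _ _ hne => IsPrimitiveRoot.disjoint hne

theorem exists_sum_primitiveRoots_prime_pow_pow_eq {p k : ℕ} (hp : p.Prime)
    (hζ : IsPrimitiveRoot ζ (p ^ (k + 1))) (i : ℕ) :
    ∃ c : ℤ, ∑ μ ∈ primitiveRoots (p ^ (k + 1)) R, μ ^ i = p ^ k * c := by
  have hζp : IsPrimitiveRoot (ζ ^ p) (p ^ k) :=
    hζ.pow (pow_pos hp.pos _) (pow_succ' p k)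
  obtain ⟨a, ha⟩ := exists_sum_nthRootsFinset_pow_eq hζ i
  obtain ⟨b, hb⟩ := exists_sum_nthRootsFinset_pow_eq hζp i
  rw [sum_nthRootsFinset_eq_sum_divisors, Nat.sum_divisors_prime_pow hp] at ha hb
  rw [sum_range_succ, hb] at ha
  refine ⟨p * a - b, ?_⟩
  push_cast at ha ⊢
  linear_combination ha

end RootsOfUnity

section Trace

variable {F K : Type*} [Field F] [Field K] [Algebra F K] {ζ : K}

theorem isCyclotomicExtension_of_adjoin_eq_top {n : ℕ} [NeZero n] (hζ : IsPrimitiveRoot ζ n)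
    (hgen : Algebra.adjoin F {ζ} = ⊤) : IsCyclotomicExtension {n} F K := by
  have : IsCyclotomicExtension {n} F (⊤ : Subalgebra F K) :=
    (isCyclotomicExtension_singleton_iff_eq_adjoin n ⊤ hζ).2 hgen.symm
  exact .equiv {n} F (⊤ : Subalgebra F K) Subalgebra.topEquiv

theorem trace_pow_eq_sum_primitiveRoots {n : ℕ} [NeZero n] [IsCyclotomicExtension {n} F K]
    (hζ : IsPrimitiveRoot ζ n) (hirr : Irreducible (cyclotomic n F)) (i : ℕ) (E : Type*) [Field E]
    [Algebra F E] [IsAlgClosed E] :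
    algebraMap F E (Algebra.trace F K (ζ ^ i)) = ∑ μ ∈ primitiveRoots n E, μ ^ i := by
  have := IsCyclotomicExtension.finiteDimensional {n} F K
  have := IsCyclotomicExtension.isSeparable {n} F K
  rw [trace_eq_sum_embeddings E, ← sum_coe_sort (primitiveRoots n E)]
  exact Fintype.sum_equiv (hζ.embeddingsEquivPrimitiveRoots E hirr) _ _ fun σ => by simp

variable {p k : ℕ} [Fact p.Prime] [IsCyclotomicExtension {p ^ (k + 1)} F K]

theorem exists_trace_pow_eq_prime_pow_mul (hζ : IsPrimitiveRoot ζ (p ^ (k + 1)))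
    (hirr : Irreducible (cyclotomic (p ^ (k + 1)) F)) (i : ℕ) :
    ∃ c : ℤ, Algebra.trace F K (ζ ^ i) = p ^ k * c := by
  let E := AlgebraicClosure K
  obtain ⟨c, hc⟩ := exists_sum_primitiveRoots_prime_pow_pow_eq Fact.out
    (hζ.map_of_injective (algebraMap K E).injective) i
  refine ⟨c, (algebraMap F E).injective ?_⟩
  rw [trace_pow_eq_sum_primitiveRoots hζ hirr i E, hc]
  simp

theorem exists_trace_aeval_eq_prime_pow_mul (hζ : IsPrimitiveRoot ζ (p ^ (k + 1)))
    (hirr : Irreducible (cyclotomic (p ^ (k + 1)) F)) (f : ℤ[X]) :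
    ∃ c : ℤ, Algebra.trace F K (aeval ζ f) = p ^ k * c := by
  choose c hc using exists_trace_pow_eq_prime_pow_mul (K := K) hζ hirr
  refine ⟨∑ i ∈ range (f.natDegree + 1), f.coeff i * c i, ?_⟩
  rw [aeval_eq_sum_range, map_sum, Int.cast_sum, mul_sum]
  refine sum_congr rfl fun i _ => ?_
  rw [map_zsmul, hc, zsmul_eq_mul, Int.cast_mul, mul_left_comm]

end Trace

section PowerExpansion

variable {p : ℕ} [Fact p.Prime] {K : Type*} [NormedField K] {π : K} {e : ℕ}

theorem ne_zero_of_norm_pow_eq_inv_prime (hπ : ‖π‖ ^ e = (p : ℝ)⁻¹) : e ≠ 0 := by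
  rintro rfl
  exact (Fact.out : p.Prime).ne_one (by simpa [eq_comm] using hπ)

theorem norm_pos_and_lt_one_of_norm_pow_eq_inv_prime (hπ : ‖π‖ ^ e = (p : ℝ)⁻¹) :
    0 < ‖π‖ ∧ ‖π‖ < 1 := by
  have he := ne_zero_of_norm_pow_eq_inv_prime hπ
  have hp : (1 : ℝ) < p := mod_cast (Fact.out : p.Prime).one_lt
  refine ⟨norm_pos_iff.2 ?_, (pow_lt_one_iff_of_nonneg (norm_nonneg π) he).1 ?_⟩
  · rintro rfl
    rw [norm_zero, zero_pow he] at hπ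
    exact (inv_pos.2 (one_pos.trans hp)).ne hπ
  · exact hπ ▸ inv_lt_one_of_one_lt₀ hp

variable [NormedAlgebra ℚ_[p] K]

theorem norm_smul_pow_eq_zpow (hπ : ‖π‖ ^ e = (p : ℝ)⁻¹) {a : ℚ_[p]} (ha : a ≠ 0) (i : ℕ) :
    ‖a • π ^ i‖ = ‖π‖ ^ (e * a.valuation + i) := by
  have hpos := (norm_pos_and_lt_one_of_norm_pow_eq_inv_prime hπ).1
  rw [norm_smul, norm_pow, Padic.norm_eq_zpow_neg_valuation ha, zpow_add₀ hpos.ne', zpow_mul,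
    zpow_natCast, hπ, inv_zpow', zpow_natCast]

theorem norm_smul_pow_ne (hπ : ‖π‖ ^ e = (p : ℝ)⁻¹) {a b : ℚ_[p]} (ha : a ≠ 0) (hb : b ≠ 0)
    {i j : Fin e} (hij : i ≠ j) : ‖a • π ^ (i : ℕ)‖ ≠ ‖b • π ^ (j : ℕ)‖ := by
  obtain ⟨hpos, hlt⟩ := norm_pos_and_lt_one_of_norm_pow_eq_inv_prime hπ
  rw [norm_smul_pow_eq_zpow hπ ha, norm_smul_pow_eq_zpow hπ hb]
  intro h
  have hexp := congrArg (· % (e : ℤ)) (zpow_right_injective₀ hpos hlt.ne h)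
  simp only [Int.mul_add_emod_self_left] at hexp
  rw [Int.emod_eq_of_lt (by lia) (mod_cast i.isLt),
    Int.emod_eq_of_lt (by lia) (mod_cast j.isLt)] at hexp
  exact hij (Fin.ext (mod_cast hexp))

variable [IsUltrametricDist K]

theorem nnnorm_sum_smul_pow_eq_sup (hπ : ‖π‖ ^ e = (p : ℝ)⁻¹) (a : Fin e → ℚ_[p]) :
    ‖∑ i, a i • π ^ (i : ℕ)‖₊ = univ.sup fun i => ‖a i • π ^ (i : ℕ)‖₊ := by
  classical
  have hsupp : ∑ i, a i • π ^ (i : ℕ) = ∑ i with a i ≠ 0, a i • π ^ (i : ℕ) :=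
    (sum_filter_of_ne fun i _ h => left_ne_zero_of_smul h).symm
  have hne : (univ.filter (a · ≠ 0) : Set (Fin e)).Pairwise fun i j =>
      ‖a i • π ^ (i : ℕ)‖₊ ≠ ‖a j • π ^ (j : ℕ)‖₊ := fun i hi j hj hij h =>
    norm_smul_pow_ne hπ (by simpa using hi) (by simpa using hj) hij (congrArg NNReal.toReal h)
  rw [hsupp, IsUltrametricDist.nnnorm_sum_eq_sup_of_pairwise_ne hne]
  refine le_antisymm (sup_mono (filter_subset _ _)) (Finset.sup_le fun i _ => ?_)
  by_cases hi : a i = 0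
  · simp [hi]
  · exact le_sup (f := fun i => ‖a i • π ^ (i : ℕ)‖₊) (by simpa using hi)

theorem norm_smul_pow_le_norm_sum (hπ : ‖π‖ ^ e = (p : ℝ)⁻¹) (a : Fin e → ℚ_[p]) (i : Fin e) :
    ‖a i • π ^ (i : ℕ)‖ ≤ ‖∑ j, a j • π ^ (j : ℕ)‖ :=
  show ‖a i • π ^ (i : ℕ)‖₊ ≤ ‖∑ j, a j • π ^ (j : ℕ)‖₊ from
    nnnorm_sum_smul_pow_eq_sup hπ a ▸ le_sup (f := fun i => ‖a i • π ^ (i : ℕ)‖₊) (mem_univ i)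

theorem linearIndependent_pow_of_norm_pow_eq_inv_prime (hπ : ‖π‖ ^ e = (p : ℝ)⁻¹) :
    LinearIndependent ℚ_[p] fun i : Fin e => π ^ (i : ℕ) := by
  refine Fintype.linearIndependent_iff.2 fun a ha i => ?_
  have hle := norm_smul_pow_le_norm_sum hπ a i
  rw [ha, norm_zero, norm_le_zero_iff, smul_eq_zero] at hle
  exact hle.resolve_right
    (pow_ne_zero _ (norm_pos_iff.1 (norm_pos_and_lt_one_of_norm_pow_eq_inv_prime hπ).1))

theorem norm_le_one_of_norm_sum_smul_pow_le_one (hπ : ‖π‖ ^ e = (p : ℝ)⁻¹)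
    {a : Fin e → ℚ_[p]} (h : ‖∑ j, a j • π ^ (j : ℕ)‖ ≤ 1) (i : Fin e) : ‖a i‖ ≤ 1 := by
  obtain ⟨hpos, hlt⟩ := norm_pos_and_lt_one_of_norm_pow_eq_inv_prime hπ
  by_cases ha : a i = 0
  · simp [ha]
  have hterm := (norm_smul_pow_le_norm_sum hπ a i).trans h
  rw [norm_smul_pow_eq_zpow hπ ha, zpow_le_one_iff_right_of_lt_one₀ hpos hlt] at hterm
  rw [Padic.norm_le_one_iff_val_nonneg]
  by_contra! hval
  have hi : (i : ℤ) < e := mod_cast i.isLt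
  nlinarith

variable (hπ : ‖π‖ ^ finrank ℚ_[p] K = (p : ℝ)⁻¹)
include hπ

theorem exists_eq_sum_smul_pow (x : K) :
    ∃ a : Fin (finrank ℚ_[p] K) → ℚ_[p], x = ∑ i, a i • π ^ (i : ℕ) := by
  have : FiniteDimensional ℚ_[p] K :=
    .of_finrank_pos (ne_zero_of_norm_pow_eq_inv_prime hπ).bot_lt
  have hspan := (linearIndependent_pow_of_norm_pow_eq_inv_prime hπ).span_eq_top_of_card_eq_finrank'
    (Fintype.card_fin _)
  obtain ⟨a, ha⟩ := (Submodule.mem_span_range_iff_exists_fun ℚ_[p]).1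
    (hspan ▸ Submodule.mem_top : x ∈ _)
  exact ⟨a, ha.symm⟩

theorem exists_norm_eq_zpow {x : K} (hx : x ≠ 0) : ∃ m : ℤ, ‖x‖ = ‖π‖ ^ m := by
  obtain ⟨a, rfl⟩ := exists_eq_sum_smul_pow hπ x
  have hne : (univ : Finset (Fin (finrank ℚ_[p] K))).Nonempty := nonempty_of_sum_ne_zero hx
  obtain ⟨i, -, hi⟩ := exists_mem_eq_sup univ hne fun i => ‖a i • π ^ (i : ℕ)‖₊
  have hnorm : ‖∑ j, a j • π ^ (j : ℕ)‖ = ‖a i • π ^ (i : ℕ)‖ :=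
    congrArg NNReal.toReal ((nnnorm_sum_smul_pow_eq_sup hπ a).trans hi)
  have ha : a i ≠ 0 := by
    intro h0
    rw [h0, zero_smul, norm_zero, norm_eq_zero] at hnorm
    exact hx hnorm
  exact ⟨_, hnorm.trans (norm_smul_pow_eq_zpow hπ ha i)⟩

theorem norm_le_of_norm_lt_one {x : K} (hx : ‖x‖ < 1) : ‖x‖ ≤ ‖π‖ := by
  obtain ⟨hpos, hlt⟩ := norm_pos_and_lt_one_of_norm_pow_eq_inv_prime hπ
  rcases eq_or_ne x 0 with rfl | hx0
  · simp
  obtain ⟨m, hm⟩ := exists_norm_eq_zpow hπ hx0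
  rw [hm, zpow_lt_one_iff_right_of_lt_one₀ hpos hlt] at hx
  rw [hm]
  exact (zpow_le_zpow_right_of_le_one₀ hpos hlt.le hx).trans_eq (zpow_one _)

theorem norm_linearMap_le_of_forall_pow {T : K →ₗ[ℚ_[p]] ℚ_[p]} {C : ℝ} (hC : 0 ≤ C)
    (hT : ∀ i : ℕ, ‖T (π ^ i)‖ ≤ C) {x : K} (hx : ‖x‖ ≤ 1) : ‖T x‖ ≤ C := by
  obtain ⟨a, rfl⟩ := exists_eq_sum_smul_pow hπ x
  rw [map_sum]
  refine IsUltrametricDist.norm_sum_le_of_forall_le_of_nonneg hC fun i _ => ?_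
  rw [map_smul, norm_smul]
  exact (mul_le_of_le_one_left (norm_nonneg _)
    (norm_le_one_of_norm_sum_smul_pow_le_one hπ hx i)).trans (hT i)

end PowerExpansion

section RootsOfUnityNorm

theorem norm_eq_one_of_pow_eq_one {D : Type*} [NormedDivisionRing D] {x : D} {n : ℕ}
    (hx : x ^ n = 1) (hn : n ≠ 0) : ‖x‖ = 1 :=
  (pow_eq_one_iff_of_nonneg (norm_nonneg x) hn).1 <| by rw [← norm_pow, hx, norm_one]

variable {K : Type*} [NormedField K] [IsUltrametricDist K]

theorem norm_pow_sub_one_le {x : K} (hx : ‖x‖ ≤ 1) (i : ℕ) : ‖x ^ i - 1‖ ≤ ‖x - 1‖ := by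
  rw [← geom_sum_mul, norm_mul]
  refine mul_le_of_le_one_left (norm_nonneg _) ?_
  refine IsUltrametricDist.norm_sum_le_of_forall_le_of_nonneg zero_le_one fun j _ => ?_
  exact (norm_pow x j).trans_le (pow_le_one₀ (norm_nonneg x) hx)

theorem norm_sub_one_eq_of_isPrimitiveRoot {n : ℕ} [NeZero n] {ζ η : K}
    (hζ : IsPrimitiveRoot ζ n) (hη : IsPrimitiveRoot η n) : ‖η - 1‖ = ‖ζ - 1‖ := by
  have hle {a b : K} (ha : IsPrimitiveRoot a n) (hb : IsPrimitiveRoot b n) :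
      ‖b - 1‖ ≤ ‖a - 1‖ := by
    obtain ⟨i, -, rfl⟩ := ha.eq_pow_of_pow_eq_one hb.pow_eq_one
    exact norm_pow_sub_one_le (norm_eq_one_of_pow_eq_one ha.pow_eq_one (NeZero.ne n)).le i
  exact le_antisymm (hle hζ hη) (hle hη hζ)

theorem norm_sub_one_pow_totient {p k : ℕ} [Fact p.Prime] {ζ : K}
    (hζ : IsPrimitiveRoot ζ (p ^ (k + 1))) :
    ‖ζ - 1‖ ^ (p ^ (k + 1)).totient = ‖(p : K)‖ := by
  have heval := eval_one_cyclotomic_prime_pow (R := K) (p := p) k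
  rw [cyclotomic_eq_prod_X_sub_primitiveRoots hζ, eval_prod] at heval
  rw [← heval, norm_prod, ← hζ.card_primitiveRoots]
  refine (prod_eq_pow_card fun η hη => ?_).symm
  rw [eval_sub, eval_X, eval_C, norm_sub_rev]
  exact norm_sub_one_eq_of_isPrimitiveRoot hζ (isPrimitiveRoot_of_mem_primitiveRoots hη)

end RootsOfUnityNorm

section Logarithm

/-- The Mercator series of `log (1 + u)`. With the convention of `tsum`, its value is `0` where
the series is not summable. -/
noncomputable def logOneAdd {K : Type*} [DivisionRing K] [TopologicalSpace K] (u : K) : K :=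
  ∑' m : ℕ, (-1) ^ m * u ^ (m + 1) / (m + 1)

theorem totient_mul_sub_lt_pow {p : ℕ} (hp : p.Prime) (k v : ℕ) :
    (p ^ (k + 1)).totient * (v - k) < p ^ v := by
  rcases le_total v k with hvk | hkv
  · simpa [Nat.sub_eq_zero_of_le hvk] using pow_pos hp.pos v
  obtain ⟨j, rfl⟩ := Nat.exists_eq_add_of_le hkv
  have hbernoulli : j * (p - 1) < p ^ j := by
    have h := one_add_mul_sub_le_pow (a := (p : ℤ)) (by lia) j
    zify [hp.one_le]
    lia
  rw [Nat.totient_prime_pow_succ hp, Nat.add_sub_cancel_left, pow_add, mul_assoc, mul_comm (p - 1)]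
  exact Nat.mul_lt_mul_of_pos_left hbernoulli (pow_pos hp.pos k)

variable {p k : ℕ} [Fact p.Prime] {K : Type*} [NormedField K] [NormedAlgebra ℚ_[p] K] {u : K}

theorem norm_natCast_eq_inv_pow_padicValNat {m : ℕ} (hm : m ≠ 0) :
    ‖(m : K)‖ = ((p : ℝ) ^ padicValNat p m)⁻¹ := by
  rw [← map_natCast (algebraMap ℚ_[p] K), norm_algebraMap',
    Padic.norm_eq_zpow_neg_valuation (mod_cast hm), Padic.valuation_natCast, zpow_neg,
    zpow_natCast]

theorem norm_pow_le_prime_pow_mul_norm_natCast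
    (hu : ‖u‖ ^ (p ^ (k + 1)).totient ≤ (p : ℝ)⁻¹) (m : ℕ) :
    ‖u‖ ^ m ≤ (p : ℝ) ^ k * ‖((m + 1 : ℕ) : K)‖ := by
  have hp : p.Prime := Fact.out
  have hp1 : (1 : ℝ) ≤ p := mod_cast hp.one_le
  have hu1 : ‖u‖ ≤ 1 :=
    (pow_le_one_iff_of_nonneg (norm_nonneg u) (Nat.totient_pos.2 (pow_pos hp.pos _)).ne').1
      (hu.trans (inv_le_one_of_one_le₀ hp1))
  set v := padicValNat p (m + 1)
  have hexp : (p ^ (k + 1)).totient * (v - k) ≤ m := Nat.lt_succ_iff.1 <|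
    (totient_mul_sub_lt_pow hp k v).trans_le (Nat.le_of_dvd m.succ_pos pow_padicValNat_dvd)
  have hpv : (p : ℝ) ^ v ≤ p ^ (v - k) * p ^ k := by
    rw [← pow_add]
    exact pow_le_pow_right₀ hp1 (by lia)
  calc ‖u‖ ^ m ≤ ‖u‖ ^ ((p ^ (k + 1)).totient * (v - k)) :=
        pow_le_pow_of_le_one (norm_nonneg u) hu1 hexp
    _ ≤ ((p : ℝ) ^ (v - k))⁻¹ := by
        rw [pow_mul, ← inv_pow]
        exact pow_le_pow_left₀ (by positivity) hu _
    _ ≤ p ^ k * ((p : ℝ) ^ v)⁻¹ := by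
        have := hp.pos
        rw [← div_eq_mul_inv, inv_le_comm₀ (by positivity) (by positivity), inv_div,
          div_le_iff₀ (by positivity)]
        exact hpv
    _ = p ^ k * ‖((m + 1 : ℕ) : K)‖ := by
        rw [norm_natCast_eq_inv_pow_padicValNat (p := p) m.succ_ne_zero]

theorem norm_logOneAdd_le [IsUltrametricDist K]
    (hu : ‖u‖ ^ (p ^ (k + 1)).totient ≤ (p : ℝ)⁻¹) : ‖logOneAdd u‖ ≤ p ^ k * ‖u‖ := by
  refine IsUltrametricDist.norm_tsum_le_of_forall_le_of_nonneg (by positivity) fun m => ?_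
  have hm : 0 < ‖((m + 1 : ℕ) : K)‖ := by
    rw [norm_natCast_eq_inv_pow_padicValNat (p := p) m.succ_ne_zero]
    have := (Fact.out : p.Prime).pos
    positivity
  rw [← Nat.cast_succ, norm_div, norm_mul, norm_pow, norm_neg, norm_one, one_pow, one_mul,
    norm_pow, pow_succ, div_le_iff₀ hm, mul_right_comm]
  exact mul_le_mul_of_nonneg_right (norm_pow_le_prime_pow_mul_norm_natCast hu m) (norm_nonneg u)

end Logarithm

section Cyclotomic

variable {p k : ℕ} [Fact p.Prime] {K : Type*} [NormedField K] [NormedAlgebra ℚ_[p] K]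
  [IsUltrametricDist K] {ζ : K}
  (hζ : IsPrimitiveRoot ζ (p ^ (k + 1)))
include hζ

theorem norm_sub_one_pow_totient_eq_inv_prime :
    ‖ζ - 1‖ ^ (p ^ (k + 1)).totient = (p : ℝ)⁻¹ := by
  rw [norm_sub_one_pow_totient hζ, ← map_natCast (algebraMap ℚ_[p] K), norm_algebraMap',
    Padic.norm_p]

variable [IsCyclotomicExtension {p ^ (k + 1)} ℚ_[p] K]

theorem irreducible_cyclotomic_prime_pow_padic : Irreducible (cyclotomic (p ^ (k + 1)) ℚ_[p]) := by
  have hint : IsIntegral ℚ_[p] ζ := (hζ.isIntegral (NeZero.pos _)).tower_top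
  have := IsCyclotomicExtension.finiteDimensional {p ^ (k + 1)} ℚ_[p] K
  have hroot : aeval ζ (cyclotomic (p ^ (k + 1)) ℚ_[p]) = 0 := by
    rw [aeval_def, ← eval_map, map_cyclotomic]
    exact hζ.isRoot_cyclotomic (NeZero.pos _)
  have hdeg : (cyclotomic (p ^ (k + 1)) ℚ_[p]).natDegree ≤ (minpoly ℚ_[p] ζ).natDegree := by
    rw [natDegree_cyclotomic, ← hζ.powerBasis_dim ℚ_[p], ← PowerBasis.finrank]
    simpa using (linearIndependent_pow_of_norm_pow_eq_inv_prime
      (norm_sub_one_pow_totient_eq_inv_prime hζ)).fintype_card_le_finrank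
  rw [eq_of_monic_of_dvd_of_natDegree_le (minpoly.monic hint) (cyclotomic.monic _ _)
    (minpoly.dvd _ _ hroot) hdeg]
  exact minpoly.irreducible hint

theorem norm_sub_one_pow_finrank_eq_inv_prime :
    ‖ζ - 1‖ ^ finrank ℚ_[p] K = (p : ℝ)⁻¹ := by
  rw [IsCyclotomicExtension.finrank K (irreducible_cyclotomic_prime_pow_padic hζ),
    norm_sub_one_pow_totient_eq_inv_prime hζ]

theorem norm_trace_le_of_norm_le_one {x : K} (hx : ‖x‖ ≤ 1) :
    ‖Algebra.trace ℚ_[p] K x‖ ≤ ((p : ℝ) ^ k)⁻¹ := by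
  refine norm_linearMap_le_of_forall_pow (norm_sub_one_pow_finrank_eq_inv_prime hζ)
    (by positivity) (fun i => ?_) hx
  obtain ⟨c, hc⟩ := exists_trace_aeval_eq_prime_pow_mul hζ
    (irreducible_cyclotomic_prime_pow_padic hζ) ((X - 1 : ℤ[X]) ^ i)
  simp only [map_pow, map_sub, aeval_X, map_one] at hc
  rw [hc, norm_mul, norm_pow, Padic.norm_p, inv_pow]
  exact mul_le_of_le_one_right (by positivity) (Padic.norm_int_le_one c)

theorem norm_trace_le_one_of_norm_le {x : K} (hx : ‖x‖ ≤ p ^ k) :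
    ‖Algebra.trace ℚ_[p] K x‖ ≤ 1 := by
  have hpk : (0 : ℝ) < p ^ k := pow_pos (mod_cast (Fact.out : p.Prime).pos) k
  have hscale : ‖(p : ℚ_[p]) ^ k‖ = ((p : ℝ) ^ k)⁻¹ := by
    rw [norm_pow, Padic.norm_p, inv_pow]
  have htrace := norm_trace_le_of_norm_le_one hζ (x := (p : ℚ_[p]) ^ k • x) (by
    rwa [norm_smul, hscale, inv_mul_le_one₀ hpk])
  rwa [map_smul, norm_smul, hscale, mul_le_iff_le_one_right (inv_pos.2 hpk)] at htrace

theorem norm_inv_mul_mul_logOneAdd_le {u : K} (hu : ‖u‖ < 1) :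
    ‖(ζ - 1)⁻¹ * ζ * logOneAdd u‖ ≤ p ^ k := by
  have hπ := norm_sub_one_pow_totient_eq_inv_prime hζ
  have hle : ‖u‖ ≤ ‖ζ - 1‖ := norm_le_of_norm_lt_one (norm_sub_one_pow_finrank_eq_inv_prime hζ) hu
  have hlog : ‖logOneAdd u‖ ≤ p ^ k * ‖u‖ :=
    norm_logOneAdd_le ((pow_le_pow_left₀ (norm_nonneg u) hle _).trans_eq hπ)
  rw [norm_mul, norm_mul, norm_inv, norm_eq_one_of_pow_eq_one hζ.pow_eq_one (NeZero.ne _), mul_one,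
    inv_mul_le_iff₀ (norm_pos_and_lt_one_of_norm_pow_eq_inv_prime hπ).1, mul_comm]
  exact hlog.trans (by gcongr)

end Cyclotomic

theorem vostokov_stmt12_general (p : ℕ) [Fact p.Prime] (n : ℕ) (hn : 1 ≤ n)
    (K : Type*) [NormedField K] [Algebra ℚ_[p] K]
    (hnorm : ∀ x : ℚ_[p], ‖algebraMap ℚ_[p] K x‖ = ‖x‖)
    (ζ : K) (hζ : IsPrimitiveRoot ζ (p ^ n))
    (hgen : Algebra.adjoin ℚ_[p] {ζ} = ⊤)
    (ε : K) (hε : ‖ε - 1‖ < 1) :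
    ∃ c : ℤ_[p],
      Algebra.trace ℚ_[p] K
          ((ζ - 1)⁻¹ * ζ * ∑' m : ℕ, (-1 : K) ^ m * (ε - 1) ^ (m + 1) / (m + 1)) =
        (c : ℚ_[p]) := by
  obtain ⟨k, rfl⟩ := Nat.exists_eq_add_of_le' hn
  let : NormedAlgebra ℚ_[p] K :=
    { norm_smul_le := fun a x => by rw [Algebra.smul_def, norm_mul, hnorm] }
  have : IsUltrametricDist K := .of_normedAlgebra ℚ_[p]
  have : IsCyclotomicExtension {p ^ (k + 1)} ℚ_[p] K :=
    isCyclotomicExtension_of_adjoin_eq_top hζ hgen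
  exact ⟨⟨_, norm_trace_le_one_of_norm_le hζ (norm_inv_mul_mul_logOneAdd_le hζ hε)⟩, rfl⟩

/-- let `p` be an odd prime, `n ≥ 1`, `K = ℚ_p(ζ_{p^n})`,
`π = ζ_{p^n} - 1`.  For a principal unit `ε` of `K`,
`Tr_{K/ℚ_p}(π^{-1}·ζ_{p^n}·log ε)` lies in `ℤ_p` (so the second Artin–Hasse formula
`(ε,π)_{p^n} = ζ_{p^n}^{Tr(π^{-1}ζ_{p^n} log ε)/p^n}` defines an element of `μ_{p^n}`). -/
theorem vostokov_stmt12 (p : ℕ) [Fact p.Prime] (hp : p ≠ 2) (n : ℕ) (hn : 1 ≤ n)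
    (K : Type*) [NormedField K] [CompleteSpace K] [Algebra ℚ_[p] K]
    [FiniteDimensional ℚ_[p] K]
    (hnorm : ∀ x : ℚ_[p], ‖algebraMap ℚ_[p] K x‖ = ‖x‖)
    (ζ : K) (hζ : IsPrimitiveRoot ζ (p ^ n))
    (hgen : Algebra.adjoin ℚ_[p] {ζ} = ⊤)
    (ε : K) (hε : ‖ε - 1‖ < 1) :
    ∃ c : ℤ_[p],
      Algebra.trace ℚ_[p] K
          ((ζ - 1)⁻¹ * ζ * ∑' m : ℕ, (-1 : K) ^ m * (ε - 1) ^ (m + 1) / (m + 1)) =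
        (c : ℚ_[p]) :=
  vostokov_stmt12_general p n hn K hnorm ζ hζ hgen ε hε
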